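/- Let Z₁,...,Z_p be i.i.d. standard normal random variables and define Φ_p = E[(∏_{j=1}^p Z_j²)(∏_{j=2}^p (Z_j - Z_{j-1})²)]. Then Φ_p = ((3+√15)^p - (3-√15)^p)/(2√15). -/

import Mathlib

open MeasureTheory Real

/-!
The weight couples neighbouring variables only, so integrating out `z 0, z 1, …` in turn iterates
the transfer operator `T f y = ∫ f x · (y (y - x))² dμ(x)`. Let `μ` be a measure on `ℝ` with moments
`m₂, m₄, m₆` and vanishing third and fifth moments. If `s² = m₂ m₆`, then the function
`f_s x = x² (m₂ x² + s)` is an eigenfunction of `T` with eigenvalue `m₄ + s`. The function `x²` that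
starts the recursion is `(f_s - f_{-s}) / (2 s)`, hence the two powers in the closed form; for the
standard Gaussian measure `m₂ = 1`, `m₄ = 3`, `m₆ = 15`.
-/

section ProductMeasures

variable {ι : Type*} [Fintype ι]

lemma pi_withDensity_ofReal {α : ι → Type*} [∀ i, MeasurableSpace (α i)]
    {μ : ∀ i, Measure (α i)} [∀ i, SigmaFinite (μ i)] {g : ∀ i, α i → ℝ}
    (hg : ∀ i, Integrable (g i) (μ i)) (hg_nonneg : ∀ i x, 0 ≤ g i x) :
    Measure.pi (fun i => (μ i).withDensity fun x => ENNReal.ofReal (g i x)) =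
      (Measure.pi μ).withDensity fun x => ENNReal.ofReal (∏ i, g i (x i)) := by
  have := fun i => isFiniteMeasure_withDensity_ofReal (hg i).2
  refine Measure.pi_eq fun s hs => ?_
  have hg_restrict : ∀ i, Integrable (g i) ((μ i).restrict (s i)) := fun i => (hg i).restrict
  calc (Measure.pi μ).withDensity (fun x => ENNReal.ofReal (∏ i, g i (x i))) (Set.univ.pi s)
      = ∫⁻ x, ENNReal.ofReal (∏ i, g i (x i)) ∂Measure.pi fun i => (μ i).restrict (s i) := by
        rw [withDensity_apply _ (.univ_pi hs), Measure.restrict_pi_pi]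
    _ = ENNReal.ofReal (∏ i, ∫ x in s i, g i x ∂μ i) := by
        rw [← integral_fintype_prod_eq_prod, ofReal_integral_eq_lintegral_ofReal
          (Integrable.fintype_prod_dep hg_restrict)
          (ae_of_all _ fun x => Finset.prod_nonneg fun i _ => hg_nonneg i (x i))]
    _ = ∏ i, (μ i).withDensity (fun x => ENNReal.ofReal (g i x)) (s i) := by
        rw [ENNReal.ofReal_prod_of_nonneg fun i _ => integral_nonneg (hg_nonneg i)]
        refine Finset.prod_congr rfl fun i _ => ?_
        rw [withDensity_apply _ (hs i), ofReal_integral_eq_lintegral_ofReal (hg_restrict i)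
          (ae_of_all _ (hg_nonneg i))]

lemma integrable_pi_eval_mvPolynomial {R : Type*} [NormedCommRing R] [MeasurableSpace R]
    {μ : ι → Measure R} [∀ i, SigmaFinite (μ i)]
    (hμ : ∀ i (k : ℕ), Integrable (fun x => x ^ k) (μ i)) (P : MvPolynomial ι R) :
    Integrable (fun z => MvPolynomial.eval z P) (Measure.pi μ) := by
  simp only [MvPolynomial.eval_eq']
  exact integrable_finsetSum _ fun d _ =>
    (Integrable.fintype_prod fun i => hμ i (d i)).const_mul _

lemma measurePreserving_fin_cons {n : ℕ} {α : Fin (n + 1) → Type*}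
    [∀ i, MeasurableSpace (α i)] (μ : ∀ i, Measure (α i)) [∀ i, SigmaFinite (μ i)] :
    MeasurePreserving (fun p : α 0 × (∀ i : Fin n, α i.succ) => (Fin.cons p.1 p.2 : ∀ i, α i))
      ((μ 0).prod (Measure.pi fun i => μ i.succ)) (Measure.pi μ) := by
  convert! (measurePreserving_piFinSuccAbove μ 0).symm using 1
  exact funext fun p => (Fin.insertNth_zero p.1 p.2).symm

end ProductMeasures

section TransferOperator

variable {α 𝕜 : Type*} [MeasurableSpace α] [RCLike 𝕜]

/-- The transfer operator with kernel `k` on functions on `(α, μ)`. The kernel integrates its first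
argument out, so that along a chain `z 0, z 1, …` the operator eliminates the earliest variable. -/
noncomputable def transferOperator (μ : Measure α) (k : α → α → 𝕜) (f : α → 𝕜) (y : α) : 𝕜 :=
  ∫ x, f x * k x y ∂μ

variable {μ : Measure α} {k : α → α → 𝕜} {f : α → 𝕜} {n : ℕ}

lemma transferOperator_iterate_of_eigen {c : 𝕜} (hf : transferOperator μ k f = c • f) (n : ℕ) :
    (transferOperator μ k)^[n] f = c ^ n • f := by
  induction n with
  | zero => simp
  | succ n ih =>
    have map_smul (a : 𝕜) : transferOperator μ k (a • f) = a • transferOperator μ k f := by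
      ext y
      simp only [transferOperator, Pi.smul_apply, smul_eq_mul, mul_assoc, integral_const_mul]
    rw [Function.iterate_succ_apply', ih, map_smul, hf, smul_smul, pow_succ]

lemma integral_pi_chain_eq_integral_transferOperator_iterate [SigmaFinite μ]
    (hf : Integrable (fun z : Fin (n + 1) → α =>
      f (z 0) * ∏ j : Fin n, k (z j.castSucc) (z j.succ)) (Measure.pi fun _ => μ)) :
    ∫ z : Fin (n + 1) → α, f (z 0) * ∏ j : Fin n, k (z j.castSucc) (z j.succ)
      ∂Measure.pi (fun _ => μ) = ∫ x, (transferOperator μ k)^[n] f x ∂μ := by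
  induction n generalizing f with
  | zero =>
    simp only [Fin.prod_univ_zero, mul_one, Function.iterate_zero, id_eq]
    convert! (measurePreserving_funUnique μ (Fin 1)).integral_comp' f
  | succ n ih =>
    have hcons := measurePreserving_fin_cons fun _ : Fin (n + 2) => μ
    have integral_head (y : Fin (n + 1) → α) :
        ∫ x, f x * (k x (y 0) * ∏ j : Fin n, k (y j.castSucc) (y j.succ)) ∂μ =
          transferOperator μ k f (y 0) * ∏ j : Fin n, k (y j.castSucc) (y j.succ) := by
      simp only [transferOperator, ← mul_assoc, integral_mul_const]
    have hprod := hcons.integrable_comp_of_integrable hf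
    have hmap := integral_map hcons.aemeasurable (hcons.map_eq.symm ▸ hf.aestronglyMeasurable)
    rw [hcons.map_eq] at hmap
    simp only [Function.comp_def, Fin.prod_univ_succ, Fin.castSucc_zero, Fin.castSucc_succ,
      Fin.cons_zero, Fin.cons_succ] at hprod hmap ⊢
    have hint := hprod.integral_prod_right
    simp only [integral_head] at hint
    rw [hmap, integral_prod_symm _ hprod]
    simp only [integral_head]
    exact ih hint

end TransferOperator

section GaussianMoments

open ProbabilityTheory
open scoped NNReal

variable {m : ℝ} {v : ℝ≥0}

lemma integrable_gaussianReal_iff_integrable_mul (hv : v ≠ 0) {f : ℝ → ℝ} :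
    Integrable f (gaussianReal m v) ↔ Integrable fun x => gaussianPDFReal m v x * f x := by
  rw [gaussianReal_of_var_ne_zero m hv, integrable_withDensity_iff_integrable_smul'
    (measurable_gaussianPDF m v) (ae_of_all _ fun _ => gaussianPDF_lt_top)]
  simp only [toReal_gaussianPDF, smul_eq_mul]

lemma hasDerivAt_gaussianPDFReal (m : ℝ) (v : ℝ≥0) (x : ℝ) :
    HasDerivAt (gaussianPDFReal m v) (-((x - m) / v) * gaussianPDFReal m v x) x := by
  have h := ((((hasDerivAt_id x).sub_const m).pow 2).neg.div_const (2 * (v : ℝ))).exp.const_mul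
    (√(2 * π * v))⁻¹
  refine h.congr_deriv ?_
  simp only [gaussianPDFReal, id_eq, Pi.pow_apply, Pi.neg_apply]
  push_cast
  ring

lemma integral_sub_mul_gaussianReal {f f' : ℝ → ℝ} (hderiv : ∀ x, HasDerivAt f (f' x) x)
    (hf : Integrable f (gaussianReal m v)) (hf' : Integrable f' (gaussianReal m v))
    (hxf : Integrable (fun x => (x - m) * f x) (gaussianReal m v)) :
    ∫ x, (x - m) * f x ∂gaussianReal m v = v * ∫ x, f' x ∂gaussianReal m v := by
  obtain rfl | hv := eq_or_ne v 0
  · simp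
  rw [integrable_gaussianReal_iff_integrable_mul hv] at hf hf' hxf
  have hderiv_mul (x : ℝ) : HasDerivAt (fun x => gaussianPDFReal m v x * f x)
      (gaussianPDFReal m v x * f' x - (v : ℝ)⁻¹ * (gaussianPDFReal m v x * ((x - m) * f x))) x :=
    ((hasDerivAt_gaussianPDFReal m v x).mul (hderiv x)).congr_deriv (by ring)
  have hzero := integral_eq_zero_of_hasDerivAt_of_integrable hderiv_mul
    (hf'.sub (hxf.const_mul _)) hf
  rw [integral_sub hf' (hxf.const_mul _), integral_const_mul, sub_eq_zero] at hzero
  simp only [integral_gaussianReal_eq_integral_smul hv, smul_eq_mul]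
  rw [hzero, mul_inv_cancel_left₀ (NNReal.coe_ne_zero.2 hv)]

lemma integrable_pow_gaussianReal (k : ℕ) : Integrable (fun x => x ^ k) (gaussianReal m v) :=
  integrable_pow_of_mem_interior_integrableExpSet (X := id) (by simp) k

lemma integral_pow_add_two_gaussianReal (v : ℝ≥0) (k : ℕ) :
    ∫ x, x ^ (k + 2) ∂gaussianReal 0 v = (k + 1) * v * ∫ x, x ^ k ∂gaussianReal 0 v := by
  have hmul (x : ℝ) : (x - 0) * x ^ (k + 1) = x ^ (k + 2) := by ring
  have h := integral_sub_mul_gaussianReal (m := 0) (v := v) (hasDerivAt_pow (k + 1))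
    (integrable_pow_gaussianReal _) ((integrable_pow_gaussianReal _).const_mul _)
    (by simpa only [hmul] using integrable_pow_gaussianReal (k + 2))
  simp only [hmul, integral_const_mul, Nat.add_sub_cancel, Nat.cast_add_one] at h
  rw [h]
  ring

open scoped Nat in
lemma integral_pow_even_gaussianReal (v : ℝ≥0) (k : ℕ) :
    ∫ x, x ^ (2 * k) ∂gaussianReal 0 v = v ^ k * (2 * k - 1)‼ := by
  induction k with
  | zero => simp
  | succ k ih =>
    have odd_doubleFactorial : (2 * (k + 1) - 1)‼ = (2 * k + 1) * (2 * k - 1)‼ :=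
      Nat.doubleFactorial_add_one (2 * k)
    rw [mul_add_one, integral_pow_add_two_gaussianReal, ih, ← mul_add_one, odd_doubleFactorial]
    push_cast
    ring

lemma integral_pow_odd_gaussianReal (v : ℝ≥0) (k : ℕ) :
    ∫ x, x ^ (2 * k + 1) ∂gaussianReal 0 v = 0 := by
  induction k with
  | zero => simp
  | succ k ih => rw [show 2 * (k + 1) + 1 = 2 * k + 1 + 2 by ring,
      integral_pow_add_two_gaussianReal, ih, mul_zero]

lemma pi_gaussianReal_eq_withDensity {ι : Type*} [Fintype ι] (m : ι → ℝ) {v : ι → ℝ≥0}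
    (hv : ∀ i, v i ≠ 0) :
    Measure.pi (fun i => gaussianReal (m i) (v i)) =
      volume.withDensity fun z => ENNReal.ofReal (∏ i, gaussianPDFReal (m i) (v i) (z i)) := by
  simp only [gaussianReal_of_var_ne_zero _ (hv _)]
  exact pi_withDensity_ofReal (fun i => integrable_gaussianPDFReal (m i) (v i))
    fun i => gaussianPDFReal_nonneg (m i) (v i)

lemma prod_gaussianPDFReal_zero_one {n : ℕ} (z : Fin n → ℝ) :
    ∏ i, gaussianPDFReal 0 1 (z i) =
      (2 * π) ^ (-(n : ℝ) / 2) * Real.exp (-(∑ i, z i ^ 2) / 2) := by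
  have hconst : (√(2 * π))⁻¹ ^ n = (2 * π) ^ (-(n : ℝ) / 2) := by
    rw [Real.sqrt_eq_rpow, ← Real.rpow_neg (by positivity), ← Real.rpow_natCast,
      ← Real.rpow_mul (by positivity)]
    congr 1
    ring
  simp only [gaussianPDFReal, sub_zero, NNReal.coe_one, mul_one, Finset.prod_mul_distrib,
    Finset.prod_const, Finset.card_univ, Fintype.card_fin, ← Real.exp_sum, hconst,
    ← Finset.sum_div, Finset.sum_neg_distrib]

lemma integral_pi_gaussianReal_zero_one {n : ℕ} (F : (Fin n → ℝ) → ℝ) :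
    ∫ z, F z ∂Measure.pi (fun _ => gaussianReal 0 1) =
      ∫ z, F z * ((2 * π) ^ (-(n : ℝ) / 2) * Real.exp (-(∑ i, z i ^ 2) / 2)) := by
  rw [pi_gaussianReal_eq_withDensity _ fun _ => one_ne_zero,
    integral_withDensity_eq_integral_toReal_smul (by fun_prop)
      (ae_of_all _ fun _ => ENNReal.ofReal_lt_top)]
  congr with z
  rw [ENNReal.toReal_ofReal (Finset.prod_nonneg fun i _ => gaussianPDFReal_nonneg 0 1 (z i)),
    prod_gaussianPDFReal_zero_one, smul_eq_mul, mul_comm]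

end GaussianMoments

section FusionMoment

/-- The kernel of the fusion-pMOM weight: all factors that a variable `y` following `x` in the chain
contributes. Only the factor `z 0 ^ 2` of the weight remains outside the product of kernels. -/
def fusionKernel (x y : ℝ) : ℝ := (y * (y - x)) ^ 2

/-- The eigenfunction of the transfer operator with kernel `fusionKernel`, for a measure with second
moment `m₂`; here `s ^ 2` is the product of the second and the sixth moment. -/
def fusionEigenfunction (m₂ s x : ℝ) : ℝ := x ^ 2 * (m₂ * x ^ 2 + s)

lemma fusion_weight_eq_mul_prod_fusionKernel (n : ℕ) (z : Fin (n + 1) → ℝ) :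
    (∏ j, z j ^ 2) * ∏ j : Fin n, (z j.succ - z j.castSucc) ^ 2 =
      z 0 ^ 2 * ∏ j : Fin n, fusionKernel (z j.castSucc) (z j.succ) := by
  simp only [fusionKernel, mul_pow, Finset.prod_mul_distrib, Fin.prod_univ_succ, mul_assoc]

variable {μ : Measure ℝ} {m₂ m₄ m₆ s : ℝ}

lemma transferOperator_fusionEigenfunction (hμ : ∀ k : ℕ, Integrable (fun x => x ^ k) μ)
    (h₂ : ∫ x, x ^ 2 ∂μ = m₂) (h₃ : ∫ x, x ^ 3 ∂μ = 0) (h₄ : ∫ x, x ^ 4 ∂μ = m₄)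
    (h₅ : ∫ x, x ^ 5 ∂μ = 0) (h₆ : ∫ x, x ^ 6 ∂μ = m₆) (hs : s ^ 2 = m₂ * m₆) :
    transferOperator μ fusionKernel (fusionEigenfunction m₂ s) =
      (m₄ + s) • fusionEigenfunction m₂ s := by
  ext y
  let c : Fin 5 → ℝ := ![s * y ^ 4, -2 * s * y ^ 3, s * y ^ 2 + m₂ * y ^ 4, -2 * m₂ * y ^ 3,
    m₂ * y ^ 2]
  have expand (x : ℝ) : fusionEigenfunction m₂ s x * fusionKernel x y =
      ∑ i, c i * x ^ (i + 2 : ℕ) := by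
    rw [Fin.sum_univ_five]
    change x ^ 2 * (m₂ * x ^ 2 + s) * (y * (y - x)) ^ 2 =
      s * y ^ 4 * x ^ 2 + -2 * s * y ^ 3 * x ^ 3 + (s * y ^ 2 + m₂ * y ^ 4) * x ^ 4 +
        -2 * m₂ * y ^ 3 * x ^ 5 + m₂ * y ^ 2 * x ^ 6
    ring
  calc transferOperator μ fusionKernel (fusionEigenfunction m₂ s) y
      = ∑ i, c i * ∫ x, x ^ (i + 2 : ℕ) ∂μ := by
        simp only [transferOperator, expand]
        rw [integral_finsetSum _ fun i _ => (hμ _).const_mul _]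
        simp only [integral_const_mul]
    _ = s * y ^ 4 * m₂ + (s * y ^ 2 + m₂ * y ^ 4) * m₄ + m₂ * y ^ 2 * m₆ := by
        simp [Fin.sum_univ_five, c, h₂, h₃, h₄, h₅, h₆]
    _ = ((m₄ + s) • fusionEigenfunction m₂ s) y := by
        simp only [fusionEigenfunction, Pi.smul_apply, smul_eq_mul]
        linear_combination -y ^ 2 * hs

lemma integral_fusionEigenfunction (hμ : ∀ k : ℕ, Integrable (fun x => x ^ k) μ)
    (h₂ : ∫ x, x ^ 2 ∂μ = m₂) (h₄ : ∫ x, x ^ 4 ∂μ = m₄) :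
    ∫ x, fusionEigenfunction m₂ s x ∂μ = m₂ * (m₄ + s) := by
  have expand (x : ℝ) : fusionEigenfunction m₂ s x = m₂ * x ^ 4 + s * x ^ 2 := by
    rw [fusionEigenfunction]
    ring
  simp only [expand]
  rw [integral_add ((hμ 4).const_mul _) ((hμ 2).const_mul _), integral_const_mul,
    integral_const_mul, h₂, h₄]
  ring

lemma integrable_fusionEigenfunction_mul_prod [SigmaFinite μ]
    (hμ : ∀ k : ℕ, Integrable (fun x => x ^ k) μ) (m₂ s : ℝ) (n : ℕ) :
    Integrable (fun z : Fin (n + 1) → ℝ => fusionEigenfunction m₂ s (z 0) *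
      ∏ j : Fin n, fusionKernel (z j.castSucc) (z j.succ)) (Measure.pi fun _ => μ) := by
  open MvPolynomial in
  let P : MvPolynomial (Fin (n + 1)) ℝ := X 0 ^ 2 * (C m₂ * X 0 ^ 2 + C s) *
    ∏ j : Fin n, (X j.succ * (X j.succ - X j.castSucc)) ^ 2
  refine (integrable_pi_eval_mvPolynomial (fun _ => hμ) P).congr (ae_of_all _ fun z => ?_)
  simp [P, fusionEigenfunction, fusionKernel]

lemma integral_fusionEigenfunction_mul_prod [SigmaFinite μ]
    (hμ : ∀ k : ℕ, Integrable (fun x => x ^ k) μ)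
    (h₂ : ∫ x, x ^ 2 ∂μ = m₂) (h₃ : ∫ x, x ^ 3 ∂μ = 0) (h₄ : ∫ x, x ^ 4 ∂μ = m₄)
    (h₅ : ∫ x, x ^ 5 ∂μ = 0) (h₆ : ∫ x, x ^ 6 ∂μ = m₆) (hs : s ^ 2 = m₂ * m₆) (n : ℕ) :
    ∫ z : Fin (n + 1) → ℝ, fusionEigenfunction m₂ s (z 0) *
      ∏ j : Fin n, fusionKernel (z j.castSucc) (z j.succ) ∂Measure.pi (fun _ => μ) =
        m₂ * (m₄ + s) ^ (n + 1) := by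
  rw [integral_pi_chain_eq_integral_transferOperator_iterate
      (integrable_fusionEigenfunction_mul_prod hμ m₂ s n),
    transferOperator_iterate_of_eigen
      (transferOperator_fusionEigenfunction hμ h₂ h₃ h₄ h₅ h₆ hs)]
  simp only [Pi.smul_apply, smul_eq_mul, integral_const_mul,
    integral_fusionEigenfunction hμ h₂ h₄]
  ring

theorem fusion_pMOM_moment_closed_form_general [SigmaFinite μ]
    (hμ : ∀ k : ℕ, Integrable (fun x => x ^ k) μ)
    (h₂ : ∫ x, x ^ 2 ∂μ = m₂) (h₃ : ∫ x, x ^ 3 ∂μ = 0) (h₄ : ∫ x, x ^ 4 ∂μ = m₄)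
    (h₅ : ∫ x, x ^ 5 ∂μ = 0) (h₆ : ∫ x, x ^ 6 ∂μ = m₆) (hs : s ^ 2 = m₂ * m₆) (hs₀ : s ≠ 0)
    (n : ℕ) :
    ∫ z : Fin (n + 1) → ℝ, (∏ j, z j ^ 2) * ∏ j : Fin n, (z j.succ - z j.castSucc) ^ 2
      ∂Measure.pi (fun _ => μ) =
        m₂ * ((m₄ + s) ^ (n + 1) - (m₄ - s) ^ (n + 1)) / (2 * s) := by
  have split (z : Fin (n + 1) → ℝ) :
      (∏ j, z j ^ 2) * ∏ j : Fin n, (z j.succ - z j.castSucc) ^ 2 =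
        (fusionEigenfunction m₂ s (z 0) *
            ∏ j : Fin n, fusionKernel (z j.castSucc) (z j.succ) -
          fusionEigenfunction m₂ (-s) (z 0) *
            ∏ j : Fin n, fusionKernel (z j.castSucc) (z j.succ)) / (2 * s) := by
    rw [fusion_weight_eq_mul_prod_fusionKernel, fusionEigenfunction, fusionEigenfunction]
    field_simp
    ring
  simp only [split]
  rw [integral_div, integral_sub (integrable_fusionEigenfunction_mul_prod hμ m₂ s n)
      (integrable_fusionEigenfunction_mul_prod hμ m₂ (-s) n),
    integral_fusionEigenfunction_mul_prod hμ h₂ h₃ h₄ h₅ h₆ hs,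
    integral_fusionEigenfunction_mul_prod hμ h₂ h₃ h₄ h₅ h₆ ((neg_sq s).trans hs)]
  ring

open ProbabilityTheory in
lemma integral_fusion_weight_pi_gaussianReal (n : ℕ) :
    ∫ z : Fin (n + 1) → ℝ, (∏ j, z j ^ 2) * ∏ j : Fin n, (z j.succ - z j.castSucc) ^ 2
      ∂Measure.pi (fun _ => gaussianReal 0 1) =
        ((3 + √15) ^ (n + 1) - (3 - √15) ^ (n + 1)) / (2 * √15) := by
  have h₂ : ∫ x, x ^ 2 ∂gaussianReal 0 1 = 1 := by simpa using integral_pow_even_gaussianReal 1 1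
  have h₄ : ∫ x, x ^ 4 ∂gaussianReal 0 1 = 3 := by
    simpa [Nat.doubleFactorial] using integral_pow_even_gaussianReal 1 2
  have h₆ : ∫ x, x ^ 6 ∂gaussianReal 0 1 = 15 := by
    simpa [Nat.doubleFactorial] using integral_pow_even_gaussianReal 1 3
  have hs : √15 ^ 2 = 1 * 15 := by norm_num
  rw [fusion_pMOM_moment_closed_form_general integrable_pow_gaussianReal h₂
    (integral_pow_odd_gaussianReal 1 1) h₄ (integral_pow_odd_gaussianReal 1 2) h₆ hs
    (by positivity), one_mul]

end FusionMoment

/-- For i.i.d. standard normals Z₁,...,Z_p (p = n+1 ≥ 1),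
Φ_p = E[(∏ Z_j²)(∏ (Z_j - Z_{j-1})²)] = ((3+√15)^p - (3-√15)^p)/(2√15).
The expectation is written as an integral against the standard Gaussian density
on ℝ^p. -/
theorem fusion_pMOM_moment_closed_form (n : ℕ) :
    (∫ z : Fin (n + 1) → ℝ,
        ((∏ j, (z j) ^ 2) * ∏ j : Fin n, (z j.succ - z j.castSucc) ^ 2) *
          ((2 * π) ^ (-((n : ℝ) + 1) / 2) * Real.exp (-(∑ j, (z j) ^ 2) / 2))) =
      ((3 + Real.sqrt 15) ^ (n + 1) - (3 - Real.sqrt 15) ^ (n + 1)) /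
        (2 * Real.sqrt 15) := by
  rw [← integral_fusion_weight_pi_gaussianReal, integral_pi_gaussianReal_zero_one,
    Nat.cast_add_one]
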